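/- Let V have the CDF P_V(v) = 1 + (N−1) Σ_{n=0}^{N−2} Σ_{m=1}^{2^B} C(N−2,n) C(2^B,m) (−1)^{n+m} m (v^n − v^{m(N−1)})/(mN − (m+n)) on [0,1], and let R be an independent chi-square random variable with density r^{N−1} e^{−r}/(N−1)! on (0,∞), with integers N ≥ 3, B ≥ 1. Then D = RV has CDF P_D(d) = 1 + (e^{−d}/(N−2)!)·[Σ_{n=0}^{N−2} Σ_{m=1}^{2^B} C(N−2,n)C(2^B,m) ((−1)^{n+m} m/(mN−(m+n))) Σ_{l=0}^{N−1−n} l! C(N−1−n,l) d^{N−1−l}] − (e^{−d}/(N−2)!)·[Σ_{n=0}^{N−2} C(N−2,n)·2^B·((−1)^{n+1}/(N−1−n)) d^{N−1}] − (e^{−d}/(N−2)!)·[Σ_{n=0}^{N−2} Σ_{m=2}^{2^B} C(N−2,n)C(2^B,m) ((−1)^{n+m} m/(mN−(m+n))) Σ_{l=1}^{(m−1)(N−1)−1} (−1)^{l−1} d^{N−1+l}/(l! C((m−1)(N−1)−1, l))] − (E₁(d)/(N−2)!)·[Σ_{n=0}^{N−2} Σ_{m=2}^{2^B} C(N−2,n)C(2^B,m)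 ((−1)^{n+m} m/(mN−(m+n))) ((−1)^{(m−1)(N−1)−1} d^{m(N−1)}/(( (m−1)(N−1)−1 )!))], for d > 0, where E₁(d) = ∫_d^∞ e^{−t}/t dt. -/

import Mathlib

open MeasureTheory ProbabilityTheory Finset

/-- Exponential integral `E₁(d) = ∫_d^∞ e^{−t}/t dt`. -/
noncomputable def expIntE1 (d : ℝ) : ℝ := ∫ t in Set.Ioi d, Real.exp (-t) / t

/-!
Since `V ≤ 1`, conditioning on `R` gives `Pr(RV > d) = ∫_d^∞ φ(r) Pr(V > d / r) dr` with `φ` the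
density of `R`. Each monomial `(d / r)^j` of `Pr(V > d / r)` contributes `d^j Γ(N - j, d)`, an upper
incomplete gamma function at an integer. The recurrence `Γ(s + 1, d) = s Γ(s, d) + d^s e^{-d}`
reduces it to `e^{-d}` times a polynomial when `N - j ≥ 1`, and brings in `E₁(d) = Γ(0, d)` when
`N - j ≤ 0`.

The CDF of `V` is given through `ENNReal.ofReal`, so the formula `P_V` must be shown nonnegative on
`[0, 1]` before it can be integrated. This follows from `V = Z β`, where the quantization error `Z`
has CDF `1 - (1 - z^{N-1})^{2^B}` and `β` is an independent `Beta(1, N - 2)` variable: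
`1 - P_V(v) = ∫_v^1 (1 - v / z)^{N-2} dP_Z(z) ≤ Pr(Z > v) ≤ 1`.
-/

/-- The upper incomplete gamma function `Γ(s, d) = ∫_d^∞ e^{-t} t^{s-1} dt`. -/
noncomputable def upperGamma (s d : ℝ) : ℝ :=
  ∫ t in Set.Ioi d, Real.exp (-t) * t ^ (s - 1)

section UpperGamma

variable {d : ℝ}

lemma integrableOn_exp_neg_mul_rpow (hd : 0 < d) (s : ℝ) :
    IntegrableOn (fun t : ℝ => Real.exp (-t) * t ^ s) (Set.Ioi d) :=
  integrable_of_isBigO_exp_neg one_half_pos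
    (fun t ht => ContinuousAt.continuousWithinAt (by
      have : t ≠ 0 := (hd.trans_le ht).ne'
      fun_prop (disch := simp [this])))
    (Real.Gamma_integrand_isLittleO s).isBigO

lemma upperGamma_zero (d : ℝ) : upperGamma 0 d = expIntE1 d := by
  simp [upperGamma, expIntE1, Real.rpow_neg_one, div_eq_mul_inv]

lemma upperGamma_one (d : ℝ) : upperGamma 1 d = Real.exp (-d) := by
  simpa [upperGamma] using integral_exp_neg_Ioi d

lemma upperGamma_add_one (hd : 0 < d) (s : ℝ) :
    upperGamma (s + 1) d = Real.exp (-d) * d ^ s + s * upperGamma s d := by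
  have hderiv : ∀ t ∈ Set.Ici d, HasDerivAt (fun t : ℝ => Real.exp (-t) * t ^ s)
      (s * (Real.exp (-t) * t ^ (s - 1)) - Real.exp (-t) * t ^ s) t := fun t ht => by
    have ht0 : t ≠ 0 := (hd.trans_le ht).ne'
    refine ((hasDerivAt_neg t).exp.mul (Real.hasDerivAt_rpow_const (.inl ht0))).congr_deriv ?_
    ring
  have hint := integrableOn_exp_neg_mul_rpow hd s
  have hint' := (integrableOn_exp_neg_mul_rpow hd (s - 1)).const_mul s
  have hlim : Filter.Tendsto (fun t : ℝ => Real.exp (-t) * t ^ s) Filter.atTop (nhds 0) := by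
    simpa [mul_comm] using tendsto_rpow_mul_exp_neg_mul_atTop_nhds_zero s 1 one_pos
  have hparts := integral_Ioi_of_hasDerivAt_of_tendsto' hderiv (hint'.sub hint) hlim
  rw [integral_sub hint' hint, integral_const_mul] at hparts
  rw [upperGamma, upperGamma, add_sub_cancel_right]
  linarith

lemma upperGamma_natCast_add_one (hd : 0 < d) (k : ℕ) :
    upperGamma (k + 1) d
      = Real.exp (-d) * ∑ l ∈ range (k + 1), (k.descFactorial l : ℝ) * d ^ (k - l) := by
  induction k with
  | zero => simp [upperGamma_one]
  | succ k ih =>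
    rw [upperGamma_add_one hd, Nat.cast_succ, ih, sum_range_succ' _ (k + 1)]
    simp only [Nat.succ_descFactorial_succ, Nat.add_sub_add_right, Nat.cast_mul, mul_assoc,
      ← mul_sum, Nat.descFactorial_zero, Nat.cast_succ, Nat.sub_zero]
    rw [← Nat.cast_succ, Real.rpow_natCast]
    push_cast
    rw [pow_succ]
    ring

lemma pow_mul_upperGamma_neg_natCast (hd : 0 < d) (k : ℕ) :
    d ^ (k + 1) * upperGamma (-k) d
      = Real.exp (-d) * ∑ l ∈ range k, (-1) ^ l * d ^ (l + 1) / (k.descFactorial (l + 1) : ℝ)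
        + expIntE1 d * ((-1) ^ k * d ^ (k + 1) / (k.factorial : ℝ)) := by
  induction k with
  | zero => simp [upperGamma_zero, mul_comm]
  | succ k ih =>
    have hk : (k : ℝ) + 1 ≠ 0 := by positivity
    have hrec : d ^ (k + 1) * upperGamma (-k) d
        = Real.exp (-d) - (k + 1) * (d ^ (k + 1) * upperGamma (-(k + 1 : ℕ)) d) := by
      have h := upperGamma_add_one hd (-(k + 1 : ℕ))
      rw [Real.rpow_neg hd.le, Real.rpow_natCast,
        show -((k + 1 : ℕ) : ℝ) + 1 = -k by push_cast; ring] at h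
      rw [h]
      push_cast
      field_simp
      ring
    have hsucc : d ^ (k + 1 + 1) * upperGamma (-(k + 1 : ℕ)) d
        = d / (k + 1) * (Real.exp (-d) - d ^ (k + 1) * upperGamma (-k) d) := by
      rw [hrec]
      field_simp
      ring
    have hterm : ∀ l, (-1) ^ (l + 1) * d ^ (l + 1 + 1)
          / ((k + 1).descFactorial (l + 1 + 1) : ℝ)
        = -(d / (k + 1)) * ((-1) ^ l * d ^ (l + 1) / (k.descFactorial (l + 1) : ℝ)) := fun l => by
      rw [Nat.succ_descFactorial_succ, Nat.cast_mul, Nat.cast_succ, neg_mul, div_mul_div_comm]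
      ring
    rw [hsucc, ih, sum_range_succ', sum_congr rfl fun l _ => hterm l, ← mul_sum]
    simp only [Nat.factorial_succ, Nat.succ_descFactorial_succ]
    push_cast
    field_simp
    simp only [mul_one, Nat.descFactorial_zero, Nat.cast_one]
    ring

end UpperGamma

/-- The coefficient `C(N-2, n) C(M, m) (-1)^{n+m} m / (mN - (m + n))` shared by the formulas for
`P_V` and `P_D`. The size `M` of the quantization codebook is `2^B` in the
paper. -/
noncomputable def leakageCoeff (N M n m : ℕ) : ℝ :=
  ((N - 2).choose n : ℝ) * (M.choose m : ℝ)
    * ((-1) ^ (n + m) * (m : ℝ) / ((m : ℝ) * (N : ℝ) - ((m : ℝ) + (n : ℝ))))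

/-- The CDF `P_V` on `[0, 1]` of the normalized zero-forcing leakage in `ℂ^N` for a codebook of `M`
random vectors. -/
noncomputable def leakageCDF (N M : ℕ) (v : ℝ) : ℝ :=
  1 + ((N : ℝ) - 1) * ∑ n ∈ range (N - 1), ∑ m ∈ Icc 1 M,
    ((N - 2).choose n : ℝ) * (M.choose m : ℝ) * (-1 : ℝ) ^ (n + m) * (m : ℝ)
      * (v ^ n - v ^ (m * (N - 1))) / ((m : ℝ) * (N : ℝ) - ((m : ℝ) + (n : ℝ)))

lemma leakageCDF_eq_sum_leakageCoeff (N M : ℕ) (v : ℝ) :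
    leakageCDF N M v = 1 + ((N : ℝ) - 1) * ∑ n ∈ range (N - 1), ∑ m ∈ Icc 1 M,
      leakageCoeff N M n m * (v ^ n - v ^ (m * (N - 1))) := by
  rw [leakageCDF]
  congr 2
  exact sum_congr rfl fun n _ => sum_congr rfl fun m _ => by rw [leakageCoeff]; ring

lemma leakageCoeff_one (N M n : ℕ) :
    leakageCoeff N M n 1
      = ((N - 2).choose n : ℝ) * (M : ℝ) * ((-1) ^ (n + 1) / ((N : ℝ) - 1 - (n : ℝ))) := by
  simp [leakageCoeff, sub_sub]

lemma leakageCDF_one (N M : ℕ) : leakageCDF N M 1 = 1 := by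
  simp [leakageCDF]

lemma sum_Icc_choose_mul_natCast_mul_pow_sub_one {A : Type*} [CommSemiring A] (M : ℕ)
    (x : A) :
    ∑ m ∈ Icc 1 M, (M.choose m : A) * (m * x ^ (m - 1)) = M * (1 + x) ^ (M - 1) := by
  cases M with
  | zero => simp
  | succ M =>
    rw [← Finset.Ico_add_one_right_eq_Icc, sum_Ico_eq_sum_range, Nat.add_sub_cancel,
      Nat.add_sub_cancel, add_comm 1 x, add_pow, mul_sum]
    refine sum_congr rfl fun m _ => ?_
    have h : ((M + 1 : ℕ) : A) * M.choose m = (M + 1).choose (m + 1) * (m + 1 : ℕ) := by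
      exact_mod_cast congrArg (Nat.cast (R := A)) (Nat.add_one_mul_choose_eq M m)
    rw [add_comm 1 m, Nat.add_sub_cancel, one_pow, mul_one, ← mul_assoc, ← h]
    ring

lemma sub_pow_mul_one_sub_pow_eq_sum (p M : ℕ) (v z : ℝ) :
    (z - v) ^ p * (M * (1 - z ^ (p + 1)) ^ (M - 1))
      = -∑ n ∈ range (p + 1), ∑ m ∈ Icc 1 M,
          ((p.choose n : ℝ) * (M.choose m : ℝ) * (-1) ^ (n + m) * m * v ^ n)
            * z ^ (m * (p + 1) - (n + 1)) := by
  rw [sub_eq_neg_add z v, add_pow, sub_eq_add_neg 1,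
    ← sum_Icc_choose_mul_natCast_mul_pow_sub_one, sum_mul_sum, ← sum_neg_distrib]
  refine sum_congr rfl fun n hn => ?_
  rw [← sum_neg_distrib]
  refine sum_congr rfl fun m hm => ?_
  obtain ⟨q, rfl⟩ := Nat.exists_eq_add_of_le' (mem_Icc.1 hm).1
  have hexp : (q + 1) * (p + 1) - (n + 1) = (p - n) + (p + 1) * q := by
    have := mem_range_succ_iff.1 hn
    rw [show (q + 1) * (p + 1) = (p + 1) * q + (p + 1) by ring]
    lia
  rw [hexp, pow_add z (p - n), pow_mul z, neg_pow v, neg_pow (z ^ (p + 1)), Nat.add_sub_cancel]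
  ring

lemma one_sub_leakageCDF_eq_integral (p M : ℕ) (v : ℝ) :
    1 - leakageCDF (p + 2) M v
      = (p + 1) * ∫ z in v..1, (z - v) ^ p * (M * (1 - z ^ (p + 1)) ^ (M - 1)) := by
  have hpow : ∀ n ∈ range (p + 1), ∀ m ∈ Icc 1 M,
      v ^ n * ∫ z in v..1, z ^ (m * (p + 1) - (n + 1))
        = (v ^ n - v ^ (m * (p + 1))) / (m * (p + 2 : ℕ) - (m + n)) := fun n hn m hm => by
    obtain ⟨k, hk⟩ : ∃ k, m * (p + 1) = n + 1 + k := Nat.exists_eq_add_of_le <|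
      (Nat.succ_le_of_lt (mem_range.1 hn)).trans (Nat.le_mul_of_pos_left _ (mem_Icc.1 hm).1)
    have hden : (m : ℝ) * (p + 2 : ℕ) - (m + n) = k + 1 := by
      have : (m : ℝ) * (p + 1) = n + 1 + k := mod_cast hk
      push_cast
      linear_combination this
    rw [hden, integral_pow, hk, Nat.add_sub_cancel_left]
    ring
  simp only [sub_pow_mul_one_sub_pow_eq_sum]
  rw [intervalIntegral.integral_neg, intervalIntegral.integral_finsetSum
    fun n _ => Continuous.intervalIntegrable (by fun_prop) _ _, leakageCDF,
    show ((p + 2 : ℕ) : ℝ) - 1 = p + 1 by push_cast; ring, sub_add_cancel_left, mul_neg]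
  congr 2
  refine sum_congr rfl fun n hn => ?_
  rw [intervalIntegral.integral_finsetSum
    fun m _ => Continuous.intervalIntegrable (by fun_prop) _ _]
  refine sum_congr rfl fun m hm => ?_
  rw [intervalIntegral.integral_const_mul, mul_assoc _ (v ^ n), hpow n hn m hm, mul_div_assoc]
  rfl

lemma integral_pow_mul_one_sub_pow (p : ℕ) {M : ℕ} (hM : M ≠ 0) (v : ℝ) :
    (p + 1) * ∫ z in v..1, z ^ p * (M * (1 - z ^ (p + 1)) ^ (M - 1))
      = (1 - v ^ (p + 1)) ^ M := by
  have hderiv : ∀ z ∈ Set.uIcc v 1, HasDerivAt (fun z : ℝ => -(1 - z ^ (p + 1)) ^ M)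
      ((p + 1) * (z ^ p * (M * (1 - z ^ (p + 1)) ^ (M - 1)))) z := fun z _ => by
    refine (((hasDerivAt_pow (p + 1) z).const_sub 1).pow M).neg.congr_deriv ?_
    push_cast
    ring
  rw [← intervalIntegral.integral_const_mul, intervalIntegral.integral_eq_sub_of_hasDerivAt hderiv
    (Continuous.intervalIntegrable (by fun_prop) _ _)]
  simp [hM]

lemma leakageCDF_nonneg {N M : ℕ} (hN : 2 ≤ N) (hM : 1 ≤ M) {v : ℝ}
    (hv : v ∈ Set.Icc (0 : ℝ) 1) :
    0 ≤ leakageCDF N M v := by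
  obtain ⟨p, rfl⟩ := Nat.exists_eq_add_of_le' hN
  have hmono : ∫ z in v..1, (z - v) ^ p * (M * (1 - z ^ (p + 1)) ^ (M - 1))
      ≤ ∫ z in v..1, z ^ p * (M * (1 - z ^ (p + 1)) ^ (M - 1)) := by
    refine intervalIntegral.integral_mono_on hv.2 (Continuous.intervalIntegrable (by fun_prop) _ _)
      (Continuous.intervalIntegrable (by fun_prop) _ _) fun z hz => ?_
    have hz0 : 0 ≤ z := hv.1.trans hz.1
    have : 0 ≤ 1 - z ^ (p + 1) := sub_nonneg.2 (pow_le_one₀ hz0 hz.2)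
    have : 0 ≤ z - v := sub_nonneg.2 hz.1
    gcongr
    exact sub_le_self z hv.1
  have hle_one : (1 - v ^ (p + 1)) ^ M ≤ 1 :=
    pow_le_one₀ (sub_nonneg.2 (pow_le_one₀ hv.1 hv.2)) (sub_le_self 1 (pow_nonneg hv.1 _))
  rw [← sub_le_self_iff 1]
  calc 1 - leakageCDF (p + 2) M v
      = (p + 1) * ∫ z in v..1, (z - v) ^ p * (M * (1 - z ^ (p + 1)) ^ (M - 1)) :=
        one_sub_leakageCDF_eq_integral p M v
    _ ≤ (p + 1) * ∫ z in v..1, z ^ p * (M * (1 - z ^ (p + 1)) ^ (M - 1)) := by gcongr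
    _ = (1 - v ^ (p + 1)) ^ M := integral_pow_mul_one_sub_pow p (by lia) v
    _ ≤ 1 := hle_one

section ProductTail

variable {Ω : Type*} [MeasurableSpace Ω] {μ : Measure Ω} {V R : Ω → ℝ}

lemma measureReal_lt_mul_eq_integral [IsFiniteMeasure μ] (hV : AEMeasurable V μ)
    (hR : AEMeasurable R μ) (hindep : IndepFun V R μ) (d : ℝ) :
    μ.real {ω | d < R ω * V ω} = ∫ r, μ.real {ω | d < r * V ω} ∂μ.map R := by
  have hS : MeasurableSet {x : ℝ × ℝ | d < x.1 * x.2} :=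
    measurableSet_lt measurable_const (by fun_prop)
  have hslice : ∀ r, μ.real {ω | d < r * V ω}
      = ((μ.map V) (Prod.mk r ⁻¹' {x : ℝ × ℝ | d < x.1 * x.2})).toReal := fun r => by
    rw [Measure.map_apply_of_aemeasurable hV (measurable_prodMk_left hS)]
    rfl
  simp only [hslice]
  rw [integral_toReal (measurable_measure_prodMk_left hS).aemeasurable
      (.of_forall fun r => measure_lt_top _ _), ← Measure.prod_apply hS,
    ← hindep.symm.map_prod_eq_prod_map_map hR hV,
    Measure.map_apply_of_aemeasurable (hR.prodMk hV) hS]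
  rfl

lemma measureReal_lt_mul_eq_setIntegral [IsFiniteMeasure μ] (hV : AEMeasurable V μ)
    (hR : AEMeasurable R μ) (hindep : IndepFun V R μ) (hVle : ∀ᵐ ω ∂μ, V ω ≤ 1) {φ : ℝ → ℝ}
    (hφ : Measurable φ) (hφ_nonneg : ∀ r, 0 ≤ φ r) (hφ_zero : ∀ r ≤ 0, φ r = 0)
    (hRdens : μ.map R = volume.withDensity fun r => ENNReal.ofReal (φ r)) {d : ℝ} (hd : 0 < d) :
    μ.real {ω | d < R ω * V ω} = ∫ r in Set.Ioi d, φ r * μ.real {ω | d / r < V ω} := by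
  have hvanish : ∀ r ∉ Set.Ioi d, φ r * μ.real {ω | d < r * V ω} = 0 := fun r hr => by
    obtain hr0 | hr0 := le_or_gt r 0
    · rw [hφ_zero r hr0, zero_mul]
    · have hnull : μ {ω | d < r * V ω} = 0 := measure_eq_zero_iff_ae_notMem.2 <| by
        filter_upwards [hVle] with ω hω
        exact (mul_le_of_le_one_right hr0.le hω).trans (not_lt.1 hr) |>.not_gt
      rw [measureReal_def, hnull, ENNReal.toReal_zero, mul_zero]
  rw [measureReal_lt_mul_eq_integral hV hR hindep, hRdens,
    integral_withDensity_eq_integral_toReal_smul hφ.ennreal_ofReal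
      (.of_forall fun _ => ENNReal.ofReal_lt_top)]
  simp only [ENNReal.toReal_ofReal (hφ_nonneg _), smul_eq_mul]
  rw [← setIntegral_eq_integral_of_forall_compl_eq_zero hvanish]
  refine setIntegral_congr_fun measurableSet_Ioi fun r hr => ?_
  simp only [div_lt_iff₀' (hd.trans hr)]

lemma measureReal_lt_eq_one_sub [IsProbabilityMeasure μ] {X : Ω → ℝ} (hX : AEMeasurable X μ)
    (x : ℝ) : μ.real {ω | x < X ω} = 1 - μ.real {ω | X ω ≤ x} := by
  rw [← probReal_compl_eq_one_sub₀ (nullMeasurableSet_le hX aemeasurable_const)]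
  simp only [Set.compl_ofPred, not_le]

end ProductTail

lemma exp_neg_mul_pow_mul_div_pow {r : ℝ} (hr : 0 < r) (d : ℝ) (k j : ℕ) :
    Real.exp (-r) * r ^ k * (d / r) ^ j = d ^ j * (Real.exp (-r) * r ^ ((k : ℝ) + 1 - j - 1)) := by
  rw [add_sub_right_comm, add_sub_cancel_right, Real.rpow_sub hr, Real.rpow_natCast,
    Real.rpow_natCast, div_pow]
  field_simp

lemma integrableOn_exp_neg_mul_pow_mul_div_pow {d : ℝ} (hd : 0 < d) (k j : ℕ) :
    IntegrableOn (fun r => Real.exp (-r) * r ^ k * (d / r) ^ j) (Set.Ioi d) :=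
  IntegrableOn.congr_fun ((integrableOn_exp_neg_mul_rpow hd _).const_mul (d ^ j))
    (fun _ hr => (exp_neg_mul_pow_mul_div_pow (hd.trans hr) d k j).symm) measurableSet_Ioi

lemma integral_exp_neg_mul_pow_mul_div_pow {d : ℝ} (hd : 0 < d) (k j : ℕ) :
    ∫ r in Set.Ioi d, Real.exp (-r) * r ^ k * (d / r) ^ j = d ^ j * upperGamma (k + 1 - j) d := by
  rw [upperGamma, ← integral_const_mul]
  exact setIntegral_congr_fun measurableSet_Ioi
    fun r hr => exp_neg_mul_pow_mul_div_pow (hd.trans hr) d k j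

lemma setIntegral_density_mul_one_sub_leakageCDF {N : ℕ} (hN : 2 ≤ N) (M : ℕ) {d : ℝ}
    (hd : 0 < d) :
    ∫ r in Set.Ioi d, r ^ (N - 1) * Real.exp (-r) / ((N - 1).factorial : ℝ)
        * (1 - leakageCDF N M (d / r))
      = -(∑ n ∈ range (N - 1), ∑ m ∈ Icc 1 M, leakageCoeff N M n m
          * (d ^ n * upperGamma (N - n) d
            - d ^ (m * (N - 1)) * upperGamma (N - (m * (N - 1) : ℕ)) d))
        / ((N - 2).factorial : ℝ) := by
  obtain ⟨p, rfl⟩ := Nat.exists_eq_add_of_le' hN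
  simp only [Nat.add_sub_cancel, show p + 2 - 1 = p + 1 from rfl]
  have hexpand : ∀ r : ℝ, r ^ (p + 1) * Real.exp (-r) / ((p + 1).factorial : ℝ)
        * (1 - leakageCDF (p + 2) M (d / r))
      = -(p.factorial : ℝ)⁻¹ * ∑ n ∈ range (p + 1), ∑ m ∈ Icc 1 M, leakageCoeff (p + 2) M n m
          * (Real.exp (-r) * r ^ (p + 1) * (d / r) ^ n
            - Real.exp (-r) * r ^ (p + 1) * (d / r) ^ (m * (p + 1))) := fun r => by
    rw [leakageCDF_eq_sum_leakageCoeff, Nat.factorial_succ]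
    simp only [← mul_sub, mul_left_comm (leakageCoeff _ _ _ _), ← mul_sum]
    push_cast
    field_simp
    ring
  have hint : ∀ n m, IntegrableOn (fun r => leakageCoeff (p + 2) M n m
      * (Real.exp (-r) * r ^ (p + 1) * (d / r) ^ n
        - Real.exp (-r) * r ^ (p + 1) * (d / r) ^ (m * (p + 1)))) (Set.Ioi d) := fun n m =>
    ((integrableOn_exp_neg_mul_pow_mul_div_pow hd _ _).sub
      (integrableOn_exp_neg_mul_pow_mul_div_pow hd _ _)).const_mul _
  simp only [hexpand]
  rw [integral_const_mul,
    integral_finsetSum _ fun n _ => integrable_finsetSum _ fun m _ => hint n m,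
    neg_div, neg_mul, inv_mul_eq_div]
  congr! with n _
  rw [integral_finsetSum _ fun m _ => hint n m]
  congr! with m _
  rw [integral_const_mul, integral_sub (integrableOn_exp_neg_mul_pow_mul_div_pow hd _ _)
    (integrableOn_exp_neg_mul_pow_mul_div_pow hd _ _), integral_exp_neg_mul_pow_mul_div_pow hd,
    integral_exp_neg_mul_pow_mul_div_pow hd,
    show ((p + 2 : ℕ) : ℝ) = (p + 1 : ℕ) + 1 by push_cast; ring]

lemma pow_mul_upperGamma_sub {N n : ℕ} (hn : n < N) {d : ℝ} (hd : 0 < d) :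
    d ^ n * upperGamma (N - n) d
      = Real.exp (-d) * ∑ l ∈ range (N - 1 - n + 1),
          (l.factorial : ℝ) * ((N - 1 - n).choose l : ℝ) * d ^ (N - 1 - l) := by
  obtain ⟨k, rfl⟩ := Nat.exists_eq_add_of_lt hn
  have hexp : n + k + 1 - 1 - n = k := by lia
  rw [hexp, show ((n + k + 1 : ℕ) : ℝ) - n = k + 1 by push_cast; ring,
    upperGamma_natCast_add_one hd, mul_left_comm, mul_sum]
  congr! 2 with l hl
  rw [Nat.descFactorial_eq_factorial_mul_choose, Nat.cast_mul, Nat.add_sub_cancel,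
    Nat.add_sub_assoc (mem_range_succ_iff.1 hl), pow_add]
  ring

lemma pow_mul_upperGamma_sub_mul {N m : ℕ} (hN : 2 ≤ N) (hm : 2 ≤ m) {d : ℝ} (hd : 0 < d) :
    d ^ (m * (N - 1)) * upperGamma (N - (m * (N - 1) : ℕ)) d
      = Real.exp (-d) * ∑ l ∈ Icc 1 ((m - 1) * (N - 1) - 1),
          (-1) ^ (l - 1) * d ^ (N - 1 + l)
            / ((l.factorial : ℝ) * (((m - 1) * (N - 1) - 1).choose l : ℝ))
        + expIntE1 d * ((-1) ^ ((m - 1) * (N - 1) - 1) * d ^ (m * (N - 1))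
            / (((m - 1) * (N - 1) - 1).factorial : ℝ)) := by
  obtain ⟨k, hk⟩ : ∃ k, (m - 1) * (N - 1) = k + 1 :=
    Nat.exists_eq_add_of_le' (Nat.mul_pos (by lia) (by lia))
  have hexp : m * (N - 1) = N - 1 + (k + 1) := by
    rw [← hk, Nat.sub_one_mul, Nat.add_sub_cancel' (Nat.le_mul_of_pos_left _ (by lia))]
  have harg : (N : ℝ) - (N - 1 + (k + 1) : ℕ) = -k := by
    rw [show N - 1 + (k + 1) = N + k by lia]
    push_cast
    ring
  rw [hk, hexp, harg, Nat.add_sub_cancel, pow_add, mul_assoc, pow_mul_upperGamma_neg_natCast hd,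
    ← Finset.Ico_add_one_right_eq_Icc, sum_Ico_eq_sum_range, Nat.add_sub_cancel, mul_add,
    mul_left_comm, mul_sum]
  congr 1
  · refine congrArg _ (sum_congr rfl fun l _ => ?_)
    rw [add_comm 1 l, Nat.add_sub_cancel, Nat.descFactorial_eq_factorial_mul_choose, Nat.cast_mul,
      pow_add]
    ring
  · ring

lemma sum_leakageCoeff_mul_upperGamma {N M : ℕ} (hN : 2 ≤ N) (hM : 1 ≤ M) {d : ℝ} (hd : 0 < d) :
    ∑ n ∈ range (N - 1), ∑ m ∈ Icc 1 M, leakageCoeff N M n m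
        * (d ^ n * upperGamma (N - n) d
          - d ^ (m * (N - 1)) * upperGamma (N - (m * (N - 1) : ℕ)) d)
      = Real.exp (-d) * (∑ n ∈ range (N - 1), ∑ m ∈ Icc 1 M, leakageCoeff N M n m
            * ∑ l ∈ range (N - 1 - n + 1),
                (l.factorial : ℝ) * ((N - 1 - n).choose l : ℝ) * d ^ (N - 1 - l))
        - Real.exp (-d) * (∑ n ∈ range (N - 1), leakageCoeff N M n 1 * d ^ (N - 1))
        - Real.exp (-d) * (∑ n ∈ range (N - 1), ∑ m ∈ Icc 2 M, leakageCoeff N M n m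
            * ∑ l ∈ Icc 1 ((m - 1) * (N - 1) - 1), (-1) ^ (l - 1) * d ^ (N - 1 + l)
                / ((l.factorial : ℝ) * (((m - 1) * (N - 1) - 1).choose l : ℝ)))
        - expIntE1 d * (∑ n ∈ range (N - 1), ∑ m ∈ Icc 2 M, leakageCoeff N M n m
            * ((-1) ^ ((m - 1) * (N - 1) - 1) * d ^ (m * (N - 1))
                / (((m - 1) * (N - 1) - 1).factorial : ℝ))) := by
  have hone : d ^ (1 * (N - 1)) * upperGamma (N - (1 * (N - 1) : ℕ)) d
      = Real.exp (-d) * d ^ (N - 1) := by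
    rw [one_mul, Nat.cast_pred (by lia), sub_sub_cancel, upperGamma_one, mul_comm]
  simp only [mul_sum _ _ (Real.exp (-d)), mul_sum _ _ (expIntE1 d), ← sum_sub_distrib]
  refine sum_congr rfl fun n hn => ?_
  have hn' : n < N := (mem_range.1 hn).trans_le (Nat.sub_le _ _)
  simp only [mul_sub, sum_sub_distrib, pow_mul_upperGamma_sub hn' hd]
  rw [← add_sum_Ioc_eq_sum_Icc (f := fun m => leakageCoeff N M n m * (d ^ (m * (N - 1)) * _)) hM,
    hone, sub_add_eq_sub_sub, sub_sub _ (∑ m ∈ Icc 2 M, _), ← sum_add_distrib]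
  congr! 2 with m hm
  · exact sum_congr rfl fun m _ => by ring
  · ring
  · rw [pow_mul_upperGamma_sub_mul hN (mem_Icc.1 hm).1 hd]
    ring

theorem stmt11_general {Ω : Type*} [MeasurableSpace Ω] (μ : Measure Ω) [IsProbabilityMeasure μ]
    (N M : ℕ) (hN : 2 ≤ N) (hM : 1 ≤ M) (V R : Ω → ℝ)
    (hV : AEMeasurable V μ) (hR : AEMeasurable R μ)
    (hVcdf : ∀ v ∈ Set.Icc (0 : ℝ) 1, μ {ω | V ω ≤ v} = ENNReal.ofReal (leakageCDF N M v))
    (hRdens : μ.map R = volume.withDensity fun r => ENNReal.ofReal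
      (if 0 < r then r ^ (N - 1) * Real.exp (-r) / ((N - 1).factorial : ℝ) else 0))
    (hindep : IndepFun V R μ) (d : ℝ) (hd : 0 < d) :
    μ {ω | R ω * V ω ≤ d}
      = ENNReal.ofReal (1
        + (Real.exp (-d) / ((N - 2).factorial : ℝ)) *
          (∑ n ∈ range (N - 1), ∑ m ∈ Icc 1 M, leakageCoeff N M n m
            * ∑ l ∈ range (N - 1 - n + 1),
                (l.factorial : ℝ) * ((N - 1 - n).choose l : ℝ) * d ^ (N - 1 - l))
        - (Real.exp (-d) / ((N - 2).factorial : ℝ)) *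
          (∑ n ∈ range (N - 1), ((N - 2).choose n : ℝ) * (M : ℝ)
            * ((-1) ^ (n + 1) / ((N : ℝ) - 1 - (n : ℝ))) * d ^ (N - 1))
        - (Real.exp (-d) / ((N - 2).factorial : ℝ)) *
          (∑ n ∈ range (N - 1), ∑ m ∈ Icc 2 M, leakageCoeff N M n m
            * ∑ l ∈ Icc 1 ((m - 1) * (N - 1) - 1), (-1) ^ (l - 1) * d ^ (N - 1 + l)
                / ((l.factorial : ℝ) * (((m - 1) * (N - 1) - 1).choose l : ℝ)))
        - (expIntE1 d / ((N - 2).factorial : ℝ)) *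
          (∑ n ∈ range (N - 1), ∑ m ∈ Icc 2 M, leakageCoeff N M n m
            * ((-1) ^ ((m - 1) * (N - 1) - 1) * d ^ (m * (N - 1))
                / (((m - 1) * (N - 1) - 1).factorial : ℝ)))) := by
  have hVle : ∀ᵐ ω ∂μ, V ω ≤ 1 :=
    (mem_ae_iff_prob_eq_one₀ (nullMeasurableSet_le hV aemeasurable_const)).2 <| by
      rw [hVcdf 1 (Set.right_mem_Icc.2 zero_le_one), leakageCDF_one, ENNReal.ofReal_one]
  have hVtail : ∀ v ∈ Set.Icc (0 : ℝ) 1, μ.real {ω | v < V ω} = 1 - leakageCDF N M v :=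
    fun v hv => by
      rw [measureReal_lt_eq_one_sub hV, measureReal_def, hVcdf v hv,
        ENNReal.toReal_ofReal (leakageCDF_nonneg hN hM hv)]
  have htail : μ.real {ω | d < R ω * V ω} = ∫ r in Set.Ioi d,
      r ^ (N - 1) * Real.exp (-r) / ((N - 1).factorial : ℝ) * (1 - leakageCDF N M (d / r)) := by
    rw [measureReal_lt_mul_eq_setIntegral hV hR hindep hVle
      (Measurable.ite measurableSet_Ioi (by fun_prop) measurable_const)
      (fun r => by split_ifs <;> positivity) (fun r hr => if_neg hr.not_gt) hRdens hd]
    refine setIntegral_congr_fun measurableSet_Ioi fun r hr => ?_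
    have hr0 : 0 < r := hd.trans hr
    simp only [if_pos hr0,
      hVtail (d / r) ⟨(div_pos hd hr0).le, (div_le_one hr0).2 (Set.mem_Ioi.1 hr).le⟩]
  rw [← ofReal_measureReal, ← sub_sub_cancel 1 (μ.real _),
    ← measureReal_lt_eq_one_sub (X := fun ω => R ω * V ω) (hR.mul hV), htail,
    setIntegral_density_mul_one_sub_leakageCDF hN M hd, sum_leakageCoeff_mul_upperGamma hN hM hd]
  simp only [leakageCoeff_one]
  congr 1
  ring

/-- Theorem 2 of the paper: the CDF of `D = R·V`, where `V` has the Theorem-3 CDF and `R` is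
an independent chi-square variable with density `r^(N−1) e^{−r}/(N−1)!` on `(0,∞)`. -/
theorem stmt11 {Ω : Type*} [MeasurableSpace Ω] (μ : Measure Ω) [IsProbabilityMeasure μ]
    (N B : ℕ) (hN : 3 ≤ N) (hB : 1 ≤ B) (V R : Ω → ℝ)
    (hVmeas : Measurable V) (hRmeas : Measurable R)
    (hVrange : ∀ᵐ ω ∂μ, V ω ∈ Set.Icc (0 : ℝ) 1)
    (hVcdf : ∀ v ∈ Set.Icc (0 : ℝ) 1,
      μ {ω | V ω ≤ v}
        = ENNReal.ofReal (1 + ((N : ℝ) - 1) *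
            ∑ n ∈ Finset.range (N - 1), ∑ m ∈ Finset.Icc 1 (2 ^ B),
              ((N - 2).choose n : ℝ) * ((2 ^ B).choose m : ℝ) * (-1 : ℝ) ^ (n + m)
                * (m : ℝ) * (v ^ n - v ^ (m * (N - 1)))
                / ((m : ℝ) * (N : ℝ) - ((m : ℝ) + (n : ℝ)))))
    (hRdens : Measure.map R μ = volume.withDensity (fun r =>
      ENNReal.ofReal (if 0 < r then r ^ (N - 1) * Real.exp (-r) / (Nat.factorial (N - 1) : ℝ)
        else 0)))
    (hindep : IndepFun V R μ) :
    ∀ d : ℝ, 0 < d →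
      μ {ω | R ω * V ω ≤ d}
        = ENNReal.ofReal (1
          + (Real.exp (-d) / (Nat.factorial (N - 2) : ℝ)) *
            (∑ n ∈ Finset.range (N - 1), ∑ m ∈ Finset.Icc 1 (2 ^ B),
              ((N - 2).choose n : ℝ) * ((2 ^ B).choose m : ℝ)
                * ((-1 : ℝ) ^ (n + m) * (m : ℝ)
                    / ((m : ℝ) * (N : ℝ) - ((m : ℝ) + (n : ℝ))))
                * ∑ l ∈ Finset.range (N - 1 - n + 1),
                    (Nat.factorial l : ℝ) * ((N - 1 - n).choose l : ℝ) * d ^ (N - 1 - l))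
          - (Real.exp (-d) / (Nat.factorial (N - 2) : ℝ)) *
            (∑ n ∈ Finset.range (N - 1),
              ((N - 2).choose n : ℝ) * (2 ^ B : ℝ)
                * ((-1 : ℝ) ^ (n + 1) / ((N : ℝ) - 1 - (n : ℝ))) * d ^ (N - 1))
          - (Real.exp (-d) / (Nat.factorial (N - 2) : ℝ)) *
            (∑ n ∈ Finset.range (N - 1), ∑ m ∈ Finset.Icc 2 (2 ^ B),
              ((N - 2).choose n : ℝ) * ((2 ^ B).choose m : ℝ)
                * ((-1 : ℝ) ^ (n + m) * (m : ℝ)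
                    / ((m : ℝ) * (N : ℝ) - ((m : ℝ) + (n : ℝ))))
                * ∑ l ∈ Finset.Icc 1 ((m - 1) * (N - 1) - 1),
                    (-1 : ℝ) ^ (l - 1) * d ^ (N - 1 + l)
                      / ((Nat.factorial l : ℝ) * (((m - 1) * (N - 1) - 1).choose l : ℝ)))
          - (expIntE1 d / (Nat.factorial (N - 2) : ℝ)) *
            (∑ n ∈ Finset.range (N - 1), ∑ m ∈ Finset.Icc 2 (2 ^ B),
              ((N - 2).choose n : ℝ) * ((2 ^ B).choose m : ℝ)
                * ((-1 : ℝ) ^ (n + m) * (m : ℝ)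
                    / ((m : ℝ) * (N : ℝ) - ((m : ℝ) + (n : ℝ))))
                * ((-1 : ℝ) ^ ((m - 1) * (N - 1) - 1) * d ^ (m * (N - 1))
                      / (Nat.factorial ((m - 1) * (N - 1) - 1) : ℝ)))) := by
  intro d hd
  simpa only [leakageCoeff, Nat.cast_pow, Nat.cast_ofNat] using
    stmt11_general μ N (2 ^ B) (by lia) Nat.one_le_two_pow V R hVmeas.aemeasurable
      hRmeas.aemeasurable hVcdf hRdens hindep d hd
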